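/- arXiv:2004.14317 — 2 statements merged into one kernel-verified Lean document; each statement's English description precedes it below -/
import Mathlib

section
/- Let $n \geq 2$, let $x_0 \in \mathbb{R}^n$, $\varepsilon_0 > 0$, and let $f$ be a continuous map defined on the punctured closed ball $\{ x : 0 < \Vert x - x_0 \Vert \leq \varepsilon_0 \}$ with values in $\mathbb{R}^n$. Let $y_1 \in \mathbb{R}^n$ and $\varepsilon_1 > 0$ be such that $f(S(x_0, \varepsilon_0)) \cap \overline{B(y_1, \varepsilon_1)} = \varnothing$, where $S(x_0,\varepsilon_0) = \{x : \Vert x - x_0 \Vert = \varepsilon_0\}$. Let $c \in (0, \infty]$ and let $\gamma : [0, c) \to B(x_0, \varepsilon_0) \setminus \{x_0\}$ be a continuous curve such that $f(\gamma(t)) \in \overline{B(y_1, \varepsilon_1)}$ for all $t \in [0, c)$, and such that the distance from $\gamma(t)$ to the frontier $S(x_0,\varepsilon_0) \cup \{x_0\}$ of the punctured ball tends to $0$ as $t \to c^-$. Then $\gamma(t) \to x_0$ as $t \to c^-$. -/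
open Set Metric Filter Topology ENNReal

/-- The filter on `ℝ` describing `t → c⁻` within the interval `[0, c)`, where
`c ∈ (0, ∞]` is an extended nonnegative real. For finite `c` this is the usual
left limit `t → c⁻` (with `t ≥ 0`), and for `c = ∞` it is `t → +∞`. -/
noncomputable def leftEndFilter (c : ℝ≥0∞) : Filter ℝ :=
  Filter.comap ENNReal.ofReal (𝓝[<] c) ⊓ Filter.principal (Ici (0 : ℝ))

/-- Let `n ≥ 2`, `x₀ ∈ ℝⁿ`, `ε₀ > 0`, and let `f` be continuous on the
punctured closed ball `closedBall x₀ ε₀ \ {x₀}`. Let `y₁ ∈ ℝⁿ`, `ε₁ > 0` with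
`f(S(x₀,ε₀)) ∩ closedBall y₁ ε₁ = ∅`. Let `c ∈ (0,∞]` and let `γ : [0,c) → ball x₀ ε₀ \ {x₀}`
be a continuous curve with `f(γ(t)) ∈ closedBall y₁ ε₁` for all `t ∈ [0,c)`, such that the
distance from `γ(t)` to the frontier `S(x₀,ε₀) ∪ {x₀}` of the punctured ball tends to `0`
as `t → c⁻`. Then `γ(t) → x₀` as `t → c⁻`. -/
theorem isolated_sing_stmt5 {n : ℕ} (hn : 2 ≤ n)
    (x₀ y₁ : EuclideanSpace ℝ (Fin n)) (ε₀ ε₁ : ℝ) (hε₀ : 0 < ε₀) (hε₁ : 0 < ε₁)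
    (f : EuclideanSpace ℝ (Fin n) → EuclideanSpace ℝ (Fin n))
    (hf : ContinuousOn f (closedBall x₀ ε₀ \ {x₀}))
    (hdisj : f '' (sphere x₀ ε₀) ∩ closedBall y₁ ε₁ = ∅)
    (c : ℝ≥0∞) (hc : 0 < c)
    (γ : ℝ → EuclideanSpace ℝ (Fin n))
    (hγcont : ContinuousOn γ {t : ℝ | 0 ≤ t ∧ ENNReal.ofReal t < c})
    (hγmem : ∀ t : ℝ, 0 ≤ t → ENNReal.ofReal t < c → γ t ∈ ball x₀ ε₀ \ {x₀})
    (hfγ : ∀ t : ℝ, 0 ≤ t → ENNReal.ofReal t < c → f (γ t) ∈ closedBall y₁ ε₁)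
    (hdist : Tendsto (fun t => infDist (γ t) (sphere x₀ ε₀ ∪ {x₀}))
      (leftEndFilter c) (𝓝 0)) :
    Tendsto γ (leftEndFilter c) (𝓝 x₀) := by
  have hev : ∀ᶠ t in leftEndFilter c, 0 ≤ t ∧ ENNReal.ofReal t < c := by
    unfold leftEndFilter
    have h1 : ∀ᶠ t in Filter.comap ENNReal.ofReal (𝓝[<] c), ENNReal.ofReal t < c :=
      tendsto_comap.eventually (self_mem_nhdsWithin : Iio c ∈ 𝓝[<] c)
    have h2 : ∀ᶠ t in Filter.principal (Ici (0 : ℝ)), 0 ≤ t := mem_principal_self _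
    exact (h2.filter_mono inf_le_right).and (h1.filter_mono inf_le_left)
  have hball : ∀ᶠ t in leftEndFilter c, γ t ∈ closedBall x₀ ε₀ :=
    hev.mono fun t ht => ball_subset_closedBall (hγmem t ht.1 ht.2).1
  refine (isCompact_closedBall x₀ ε₀).tendsto_nhds_of_unique_mapClusterPt hball ?_
  intro p _ hcl
  obtain ⟨U, hU, hUp⟩ := mapClusterPt_iff_ultrafilter.1 hcl
  have hclosed : IsClosed (sphere x₀ ε₀ ∪ {x₀}) := isClosed_sphere.union isClosed_singleton
  have h0 : infDist p (sphere x₀ ε₀ ∪ {x₀}) = 0 :=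
    tendsto_nhds_unique (((continuous_infDist_pt _).tendsto p).comp hUp) (hdist.mono_left hU)
  have hp : p ∈ sphere x₀ ε₀ ∪ {x₀} :=
    (hclosed.mem_iff_infDist_zero ⟨x₀, Or.inr rfl⟩).2 h0
  rcases hp with hp | hp
  · exfalso
    have hpne : p ≠ x₀ := by
      rintro rfl
      simp at hp
      exact hε₀.ne hp
    have hcp := hf p ⟨sphere_subset_closedBall hp, hpne⟩
    have hγw : Tendsto γ U (𝓝[closedBall x₀ ε₀ \ {x₀}] p) :=
      tendsto_nhdsWithin_iff.2 ⟨hUp, (hev.filter_mono hU).mono fun t ht =>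
        ⟨ball_subset_closedBall (hγmem t ht.1 ht.2).1, (hγmem t ht.1 ht.2).2⟩⟩
    have hfp : f p ∈ closedBall y₁ ε₁ :=
      isClosed_closedBall.mem_of_tendsto (hcp.tendsto.comp hγw)
        ((hev.filter_mono hU).mono fun t ht => hfγ t ht.1 ht.2)
    have : f p ∈ f '' (sphere x₀ ε₀) ∩ closedBall y₁ ε₁ := ⟨mem_image_of_mem f hp, hfp⟩
    rw [hdisj] at this
    exact this
  · exact hp
end

section
/- Let $n \geq 2$, let $D \subseteq \mathbb{R}^n$ be open, $x_0 \in D$, and let $f : D \setminus \{x_0\} \to \mathbb{R}^n$ be continuous, open (the image of every open subset of $D \setminus \{x_0\}$ is open) and discrete (for every $y \in \mathbb{R}^n$ the fiber $f^{-1}(y)$ consists of isolated points). Let $D' := f(D \setminus \{x_0\})$ and assume that the cluster set satisfies $C(f, x_0) \subseteq \partial D'$. Suppose $y_1, y_2 \in C(f, x_0)$ with $y_1 \neq y_2$, both in $\mathbb{R}^n$, and let $\varepsilon_0 > 0$ be such that $\overline{B(x_0, \varepsilon_0)} \subseteq D$ and $B(y_1,\varepsilon_1) \cap f(S(x_0,\varepsilon_0))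 = \varnothing = B(y_2,\varepsilon_2) \cap f(S(x_0,\varepsilon_0))$ for some $\varepsilon_1, \varepsilon_2 > 0$ with $\overline{B(y_1,\varepsilon_1)} \cap \overline{B(y_2,\varepsilon_2)} = \varnothing$. Then there exist $c_1, c_2 \in (0, \infty]$ and continuous curves $\alpha : [0, c_1) \to B(x_0, \varepsilon_0) \setminus \{x_0\}$ and $\beta : [0, c_2) \to B(x_0, \varepsilon_0) \setminus \{x_0\}$ such that $f(\alpha(t)) \in B(y_1, \varepsilon_1)$ for all $t \in [0, c_1)$, $f(\beta(t)) \in B(y_2, \varepsilon_2)$ for all $t \in [0, c_2)$, and $\alpha(t) \to x_0$ as $t \to c_1^-$ and $\beta(t) \to x_0$ as $t \to c_2^-$. -/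
open Set Metric Filter Topology ENNReal

/-- The cluster set `C(f, x₀)` of a map `f` defined on `S = D \ {x₀}`: the set of all
limits `y` of sequences `f (x k)` where `x k ∈ S` and `x k → x₀`. -/
def clusterSetAt {n : ℕ} (f : EuclideanSpace ℝ (Fin n) → EuclideanSpace ℝ (Fin n))
    (S : Set (EuclideanSpace ℝ (Fin n))) (x₀ : EuclideanSpace ℝ (Fin n)) :
    Set (EuclideanSpace ℝ (Fin n)) :=
  {y | ∃ x : ℕ → EuclideanSpace ℝ (Fin n), (∀ k, x k ∈ S) ∧
    Tendsto x atTop (𝓝 x₀) ∧ Tendsto (f ∘ x) atTop (𝓝 y)}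

section Helpers

/-- Infinite concatenation of paths. -/
lemma exists_concat {E : Type*} [NormedAddCommGroup E]
    (x : ℕ → E) (S : ℕ → Set E) (h : ∀ k, JoinedIn (S k) (x k) (x (k + 1))) :
    ∃ α : ℝ → E, ContinuousOn α (Ici 0) ∧ ∀ t : ℝ, 0 ≤ t → α t ∈ S ⌊t⌋₊ := by
  classical
  choose γ hγ using h
  let g : ℕ → ℝ → E := fun k t => (γ k).extend (t - k) - x k
  have hgc : ∀ k, Continuous (g k) := fun k =>
    ((γ k).continuous_extend.comp (continuous_id.sub continuous_const)).sub continuous_const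
  have hg0 : ∀ (k : ℕ) (t : ℝ), t ≤ k → g k t = 0 := by
    intro k t ht
    simp only [g]
    rw [Path.extend_of_le_zero _ (by linarith)]
    simp
  have hg1 : ∀ (k : ℕ) (t : ℝ), (k : ℝ) + 1 ≤ t → g k t = x (k + 1) - x k := by
    intro k t ht
    simp only [g]
    rw [Path.extend_of_one_le _ (by linarith)]
  let α : ℝ → E := fun t => x 0 + ∑ k ∈ Finset.range (⌊t⌋₊ + 1), g k t
  have hα : ∀ (N : ℕ) (t : ℝ), t < N → α t = x 0 + ∑ k ∈ Finset.range N, g k t := by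
    intro N t ht
    simp only [α]
    congr 1
    rcases Nat.eq_zero_or_pos N with rfl | hN
    · have : ⌊t⌋₊ = 0 := Nat.floor_of_nonpos (by simpa using ht.le)
      rw [this]
      simp only [Nat.cast_zero] at ht
      simpa using hg0 0 t (by simpa using ht.le)
    · apply Finset.sum_subset
      · intro k hk
        simp only [Finset.mem_range] at hk ⊢
        have := (Nat.floor_lt' hN.ne').2 ht
        omega
      · intro k _ hk
        simp only [Finset.mem_range, not_lt] at hk
        apply hg0
        have h1 := Nat.lt_floor_add_one t
        have h2 : ((⌊t⌋₊ + 1 : ℕ) : ℝ) ≤ k := by exact_mod_cast hk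
        push_cast at h2
        linarith
  have hαc : Continuous α := by
    rw [continuous_iff_continuousAt]
    intro t
    obtain ⟨N, hN⟩ := exists_nat_gt t
    have hc : Continuous (fun t => x 0 + ∑ k ∈ Finset.range N, g k t) :=
      continuous_const.add (continuous_finsetSum _ fun k _ => hgc k)
    refine hc.continuousAt.congr ?_
    filter_upwards [Iio_mem_nhds hN] with s hs
    exact (hα N s hs).symm
  refine ⟨α, hαc.continuousOn, fun t ht => ?_⟩
  have hfl := Nat.floor_le ht
  have key : α t = (γ ⌊t⌋₊).extend (t - ⌊t⌋₊) := by
    simp only [α]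
    rw [Finset.sum_range_succ]
    have : ∑ k ∈ Finset.range ⌊t⌋₊, g k t = ∑ k ∈ Finset.range ⌊t⌋₊, (x (k + 1) - x k) := by
      apply Finset.sum_congr rfl
      intro k hk
      apply hg1
      have : ((k + 1 : ℕ) : ℝ) ≤ ⌊t⌋₊ := by exact_mod_cast Finset.mem_range.1 hk
      push_cast at this
      linarith
    rw [this, Finset.sum_range_sub]
    simp only [g]
    abel
  have hlt := Nat.lt_floor_add_one t
  rw [key, Path.extend_apply _ ⟨by linarith, by linarith⟩]
  exact hγ _ _

variable {n : ℕ}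

/-- Surjectivity of `f` on components, over connected sets in `D'`. -/
lemma component_surj (D : Set (EuclideanSpace ℝ (Fin n)))
    (x₀ : EuclideanSpace ℝ (Fin n))
    (f : EuclideanSpace ℝ (Fin n) → EuclideanSpace ℝ (Fin n))
    (hf : ContinuousOn f (D \ {x₀})) (hD : IsOpen D)
    (hopen : ∀ U : Set (EuclideanSpace ℝ (Fin n)), U ⊆ D \ {x₀} → IsOpen U →
      IsOpen (f '' U))
    (hC : clusterSetAt f (D \ {x₀}) x₀ ⊆ frontier (f '' (D \ {x₀})))
    (ε₀ : ℝ) (hball : closedBall x₀ ε₀ ⊆ D)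
    (W : Set (EuclideanSpace ℝ (Fin n))) (hW : IsOpen W)
    (hd : W ∩ f '' (sphere x₀ ε₀) = ∅)
    (P : Set (EuclideanSpace ℝ (Fin n))) (hP : IsPreconnected P) (hPW : P ⊆ W)
    (hPD : P ⊆ f '' (D \ {x₀})) (x : EuclideanSpace ℝ (Fin n))
    (hx : x ∈ ball x₀ ε₀ \ {x₀}) (hfx : f x ∈ P) (y : EuclideanSpace ℝ (Fin n)) (hy : y ∈ P) :
    ∃ x', JoinedIn ((ball x₀ ε₀ \ {x₀}) ∩ f ⁻¹' W) x x' ∧ f x' = y := by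
  have hDo : IsOpen (D \ {x₀}) := hD.sdiff isClosed_singleton
  have hBD : ball x₀ ε₀ \ {x₀} ⊆ D \ {x₀} := fun z hz => ⟨hball (ball_subset_closedBall hz.1), hz.2⟩
  set F := (ball x₀ ε₀ \ {x₀}) ∩ f ⁻¹' W with hF
  have hFo : IsOpen F :=
    (hf.mono hBD).isOpen_inter_preimage (isOpen_ball.sdiff isClosed_singleton) hW
  have hxF : x ∈ F := ⟨hx, hPW hfx⟩
  set V := connectedComponentIn F x with hV
  have hVF : V ⊆ F := connectedComponentIn_subset F x
  have hVo : IsOpen V := hFo.connectedComponentIn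
  have hVc : IsConnected V := isConnected_connectedComponentIn_iff.2 hxF
  have hxV : x ∈ V := mem_connectedComponentIn hxF
  have hVp : IsPathConnected V := (hVo.isConnected_iff_isPathConnected).1 hVc
  have hsub : P ⊆ f '' V := by
    apply hP.subset_of_closure_inter_subset (hopen V (hVF.trans (inter_subset_left.trans hBD)) hVo)
      ⟨f x, hfx, x, hxV, rfl⟩
    rintro z ⟨hz, hzP⟩
    obtain ⟨u, hu, hulim⟩ := mem_closure_iff_seq_limit.1 hz
    choose v hvV hvu using hu
    have hvB : ∀ k, v k ∈ closedBall x₀ ε₀ := fun k =>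
      ball_subset_closedBall (hVF (hvV k)).1.1
    obtain ⟨a, ha, φ, hφ, hlim⟩ := (isCompact_closedBall x₀ ε₀).tendsto_subseq hvB
    have hflim : Tendsto (f ∘ (v ∘ φ)) atTop (𝓝 z) := by
      have : f ∘ (v ∘ φ) = u ∘ φ := by
        funext k
        exact hvu _
      rw [this]
      exact hulim.comp hφ.tendsto_atTop
    by_cases hax : a = x₀
    · exfalso
      subst hax
      have : z ∈ clusterSetAt f (D \ {a}) a :=
        ⟨v ∘ φ, fun k => hBD (hVF (hvV _)).1, hlim, hflim⟩
      have h1 := hC this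
      rw [(hopen _ subset_rfl hDo).frontier_eq] at h1
      exact h1.2 (hPD hzP)
    have haD : a ∈ D \ {x₀} := ⟨hball ha, hax⟩
    have hca : ContinuousAt f a := hf.continuousAt (hDo.mem_nhds haD)
    have hfa : f a = z := tendsto_nhds_unique (hca.tendsto.comp hlim) hflim
    have haB : a ∈ ball x₀ ε₀ := by
      rcases (mem_closedBall.1 ha).lt_or_eq with h | h
      · exact h
      · exfalso
        have : z ∈ W ∩ f '' (sphere x₀ ε₀) := ⟨hPW hzP, a, h, hfa⟩
        rw [hd] at this
        exact this
    have haF : a ∈ F := ⟨⟨haB, hax⟩, by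
      change f a ∈ W
      rw [hfa]
      exact hPW hzP⟩
    have hacl : a ∈ closure V := mem_closure_of_tendsto hlim (Eventually.of_forall fun k => hvV _)
    have hins : IsPreconnected (insert a V) :=
      hVc.isPreconnected.subset_closure (subset_insert _ _)
        (insert_subset hacl subset_closure)
    exact ⟨a, hins.subset_connectedComponentIn (mem_insert_of_mem _ hxV)
      (insert_subset haF hVF) (mem_insert _ _), hfa⟩
  obtain ⟨x', hx', h⟩ := hsub hy
  exact ⟨x', (hVp.joinedIn x hxV x' hx').mono hVF, h⟩

lemma one_side (D : Set (EuclideanSpace ℝ (Fin n)))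
    (x₀ : EuclideanSpace ℝ (Fin n))
    (f : EuclideanSpace ℝ (Fin n) → EuclideanSpace ℝ (Fin n))
    (hf : ContinuousOn f (D \ {x₀})) (hD : IsOpen D)
    (hopen : ∀ U : Set (EuclideanSpace ℝ (Fin n)), U ⊆ D \ {x₀} → IsOpen U →
      IsOpen (f '' U))
    (hC : clusterSetAt f (D \ {x₀}) x₀ ⊆ frontier (f '' (D \ {x₀})))
    (y₁ : EuclideanSpace ℝ (Fin n)) (hy₁ : y₁ ∈ clusterSetAt f (D \ {x₀}) x₀)
    (ε₀ : ℝ) (hε₀ : 0 < ε₀) (hball : closedBall x₀ ε₀ ⊆ D)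
    (ε₁ : ℝ) (hε₁ : 0 < ε₁)
    (hd₁ : ball y₁ ε₁ ∩ f '' (sphere x₀ ε₀) = ∅) :
    ∃ α : ℝ → EuclideanSpace ℝ (Fin n), ContinuousOn α (Ici 0) ∧
      (∀ t : ℝ, 0 ≤ t → α t ∈ ball x₀ ε₀ \ {x₀}) ∧
      (∀ t : ℝ, 0 ≤ t → f (α t) ∈ ball y₁ ε₁) ∧ Tendsto α atTop (𝓝 x₀) := by
  have hDo : IsOpen (D \ {x₀}) := hD.sdiff isClosed_singleton
  have hD'o : IsOpen (f '' (D \ {x₀})) := hopen _ subset_rfl hDo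
  have hy₁D : y₁ ∉ f '' (D \ {x₀}) := by
    have := hC hy₁
    rw [hD'o.frontier_eq] at this
    exact this.2
  obtain ⟨a, haB, hfa⟩ : ∃ a ∈ ball x₀ ε₀ \ {x₀}, f a ∈ ball y₁ ε₁ := by
    obtain ⟨u, huD, hu, hfu⟩ := hy₁
    obtain ⟨k, hk1, hk2⟩ := ((hu.eventually (ball_mem_nhds x₀ hε₀)).and
      (hfu.eventually (ball_mem_nhds y₁ hε₁))).exists
    exact ⟨u k, ⟨hk1, (huD k).2⟩, hk2⟩
  have haD : a ∈ D \ {x₀} := ⟨hball (ball_subset_closedBall haB.1), haB.2⟩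
  let p : ℝ → EuclideanSpace ℝ (Fin n) := fun t => AffineMap.lineMap (f a) y₁ t
  have hpc : Continuous p := AffineMap.lineMap_continuous
  have hp0 : p 0 = f a := AffineMap.lineMap_apply_zero _ _
  have hp1 : p 1 = y₁ := AffineMap.lineMap_apply_one _ _
  have hcomp : IsCompact (Icc (0 : ℝ) 1 ∩ p ⁻¹' (f '' (D \ {x₀}))ᶜ) :=
    isCompact_Icc.inter_right (hD'o.isClosed_compl.preimage hpc)
  obtain ⟨c, ⟨hc01, hcD⟩, hcmin⟩ := hcomp.exists_isLeast
    ⟨1, ⟨by norm_num, le_rfl⟩, by simpa only [mem_preimage, hp1, mem_compl_iff] using hy₁D⟩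
  have hc0 : 0 < c := by
    refine lt_of_le_of_ne hc01.1 ?_
    rintro rfl
    exact hcD (by rw [hp0]; exact ⟨a, haD, rfl⟩)
  have hpD : ∀ t, 0 ≤ t → t < c → p t ∈ f '' (D \ {x₀}) := by
    intro t h0 h1
    by_contra h
    exact absurd (hcmin ⟨⟨h0, h1.le.trans hc01.2⟩, h⟩) (not_le.2 h1)
  have hpB : ∀ t, 0 ≤ t → t ≤ 1 → p t ∈ ball y₁ ε₁ := by
    intro t h0 h1
    exact (convex_ball y₁ ε₁).lineMap_mem hfa (mem_ball_self hε₁) ⟨h0, h1⟩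
  set M := dist (f a) y₁ + 1 with hM
  have hMpos : 0 < M := by positivity
  let W : ℕ → Set (EuclideanSpace ℝ (Fin n)) := fun k =>
    ball y₁ ε₁ ∩ ball (p c) (c / (k + 1) * M)
  let τ : ℕ → ℝ := fun k => c - c / (k + 1)
  have hτ0 : τ 0 = 0 := by simp [τ]
  have hτnn : ∀ k, 0 ≤ τ k := by
    intro k
    have : c / ((k : ℝ) + 1) ≤ c := div_le_self hc0.le (by linarith [k.cast_nonneg (α := ℝ)])
    simp only [τ]
    linarith
  have hτc : ∀ k, τ k < c := by
    intro k
    have : 0 < c / ((k : ℝ) + 1) := by positivity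
    simp only [τ]
    linarith
  have hτmono : ∀ k, τ k ≤ τ (k + 1) := by
    intro k
    simp only [τ]
    have : c / (((k + 1 : ℕ) : ℝ) + 1) ≤ c / ((k : ℝ) + 1) := by
      push_cast
      gcongr
      linarith
    linarith
  have hPW : ∀ k, p '' Ico (τ k) c ⊆ W k := by
    rintro k _ ⟨t, ⟨ht1, ht2⟩, rfl⟩
    refine ⟨hpB t ((hτnn k).trans ht1) (ht2.le.trans hc01.2), ?_⟩
    rw [mem_ball]
    simp only [p]
    rw [dist_lineMap_lineMap, Real.dist_eq, abs_sub_comm, abs_of_nonneg (by linarith)]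
    have h1 : c - t ≤ c / ((k : ℝ) + 1) := by
      simp only [τ] at ht1
      linarith
    have h2 : 0 < c / ((k : ℝ) + 1) := by positivity
    calc (c - t) * dist (f a) y₁ ≤ c / ((k : ℝ) + 1) * dist (f a) y₁ := by gcongr
      _ < c / ((k : ℝ) + 1) * M := by
        apply mul_lt_mul_of_pos_left _ h2
        linarith
  have hstep : ∀ k x, ∃ x', x ∈ ball x₀ ε₀ \ {x₀} ∧ f x = p (τ k) →
      JoinedIn ((ball x₀ ε₀ \ {x₀}) ∩ f ⁻¹' (W k)) x x' ∧ f x' = p (τ (k + 1)) := by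
    intro k x
    by_cases hx : x ∈ ball x₀ ε₀ \ {x₀} ∧ f x = p (τ k)
    · obtain ⟨x', h⟩ := component_surj D x₀ f hf hD hopen hC ε₀ hball (W k)
        (isOpen_ball.inter isOpen_ball)
        (subset_eq_empty (inter_subset_inter_left _ inter_subset_left) hd₁)
        (p '' Ico (τ k) c) (isPreconnected_Ico.image _ hpc.continuousOn) (hPW k)
        (by
          rintro _ ⟨t, ht, rfl⟩
          exact hpD t ((hτnn k).trans ht.1) ht.2) x hx.1
        (by rw [hx.2]; exact ⟨_, ⟨le_rfl, hτc k⟩, rfl⟩)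
        (p (τ (k + 1))) ⟨_, ⟨hτmono k, hτc _⟩, rfl⟩
      exact ⟨x', fun _ => h⟩
    · exact ⟨x, fun h => absurd h hx⟩
  choose g hg using hstep
  let x : ℕ → EuclideanSpace ℝ (Fin n) := fun k => Nat.rec a (fun k z => g k z) k
  have hxs : ∀ k, x (k + 1) = g k (x k) := fun k => rfl
  have hxk : ∀ k, x k ∈ ball x₀ ε₀ \ {x₀} ∧ f (x k) = p (τ k) := by
    intro k
    induction k with
    | zero => exact ⟨haB, by rw [hτ0, hp0]; rfl⟩
    | succ k ih =>
      rw [hxs]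
      exact ⟨(hg k _ ih).1.target_mem.1, (hg k _ ih).2⟩
  obtain ⟨α, hαc, hα⟩ := exists_concat x (fun k => (ball x₀ ε₀ \ {x₀}) ∩ f ⁻¹' (W k))
    (fun k => (hg k _ (hxk k)).1)
  refine ⟨α, hαc, fun t ht => (hα t ht).1, fun t ht => (hα t ht).2.1, ?_⟩
  have hflim : Tendsto (f ∘ α) atTop (𝓝 (p c)) := by
    rw [tendsto_iff_dist_tendsto_zero]
    have hz : Tendsto (fun t : ℝ => c / ((⌊t⌋₊ : ℝ) + 1) * M) atTop (𝓝 0) := by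
      have h1 : Tendsto (fun t : ℝ => (⌊t⌋₊ : ℝ) + 1) atTop atTop :=
        tendsto_atTop_add_const_right _ _
          (tendsto_natCast_atTop_atTop.comp tendsto_nat_floor_atTop)
      simpa using (h1.const_div_atTop c).mul_const M
    refine squeeze_zero' (Eventually.of_forall fun _ => dist_nonneg) ?_ hz
    filter_upwards [eventually_ge_atTop 0] with t ht
    exact (mem_ball.1 (hα t ht).2.2).le
  refine (isCompact_closedBall x₀ ε₀).tendsto_nhds_of_unique_mapClusterPt ?_ ?_
  · filter_upwards [eventually_ge_atTop 0] with t ht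
    exact ball_subset_closedBall (hα t ht).1.1
  · intro z hz hcl
    by_contra hne
    have hzD : z ∈ D \ {x₀} := ⟨hball hz, hne⟩
    have hca : ContinuousAt f z := hf.continuousAt (hDo.mem_nhds hzD)
    have h1 : MapClusterPt (f z) atTop (f ∘ α) := hcl.continuousAt_comp hca
    have h2 : f z = p c := by
      by_contra hne2
      have := (disjoint_nhds_nhds.2 hne2).mono_right hflim
      exact (this.eq_bot ▸ h1 : (⊥ : Filter (EuclideanSpace ℝ (Fin n))).NeBot).ne rfl
    exact hcD ⟨z, hzD, h2⟩

lemma leftEndFilter_top_le : leftEndFilter ⊤ ≤ atTop := by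
  refine atTop_basis.ge_iff.2 fun M _ => ?_
  refine mem_inf_of_left ?_
  refine ⟨Ioi (ENNReal.ofReal M), mem_nhdsWithin_of_mem_nhds (Ioi_mem_nhds (by simp)), ?_⟩
  intro t ht
  simp only [mem_preimage, mem_Ioi] at ht
  exact le_of_lt (ENNReal.ofReal_lt_ofReal_iff'.1 ht).1

end Helpers

/-- Let `n ≥ 2`, `D ⊆ ℝⁿ` open, `x₀ ∈ D`, and let
`f : D \ {x₀} → ℝⁿ` be continuous, open and discrete. Put `D' := f(D \ {x₀})` and assume
`C(f, x₀) ⊆ ∂D'`. Suppose `y₁ ≠ y₂` are two (finite) points of `C(f, x₀)`, and `ε₀ > 0`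
satisfies `closedBall x₀ ε₀ ⊆ D`, while `ε₁, ε₂ > 0` satisfy
`ball y₁ ε₁ ∩ f(S(x₀,ε₀)) = ∅ = ball y₂ ε₂ ∩ f(S(x₀,ε₀))` and
`closedBall y₁ ε₁ ∩ closedBall y₂ ε₂ = ∅`. Then there are `c₁, c₂ ∈ (0,∞]` and continuous
curves `α : [0,c₁) → ball x₀ ε₀ \ {x₀}`, `β : [0,c₂) → ball x₀ ε₀ \ {x₀}` with
`f(α(t)) ∈ ball y₁ ε₁`, `f(β(t)) ∈ ball y₂ ε₂`, and `α(t) → x₀` as `t → c₁⁻`,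
`β(t) → x₀` as `t → c₂⁻`. -/
theorem isolated_sing_stmt6 {n : ℕ} (hn : 2 ≤ n)
    (D : Set (EuclideanSpace ℝ (Fin n))) (hD : IsOpen D)
    (x₀ : EuclideanSpace ℝ (Fin n)) (hx₀ : x₀ ∈ D)
    (f : EuclideanSpace ℝ (Fin n) → EuclideanSpace ℝ (Fin n))
    (hf : ContinuousOn f (D \ {x₀}))
    (hopen : ∀ U : Set (EuclideanSpace ℝ (Fin n)), U ⊆ D \ {x₀} → IsOpen U →
      IsOpen (f '' U))
    (hdiscrete : ∀ y : EuclideanSpace ℝ (Fin n), ∀ x ∈ (D \ {x₀}) ∩ f ⁻¹' {y},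
      ∃ ε > (0 : ℝ), ∀ z ∈ (D \ {x₀}) ∩ f ⁻¹' {y}, z ∈ ball x ε → z = x)
    (hC : clusterSetAt f (D \ {x₀}) x₀ ⊆ frontier (f '' (D \ {x₀})))
    (y₁ y₂ : EuclideanSpace ℝ (Fin n)) (hy₁ : y₁ ∈ clusterSetAt f (D \ {x₀}) x₀)
    (hy₂ : y₂ ∈ clusterSetAt f (D \ {x₀}) x₀) (hy₁y₂ : y₁ ≠ y₂)
    (ε₀ : ℝ) (hε₀ : 0 < ε₀) (hball : closedBall x₀ ε₀ ⊆ D)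
    (ε₁ ε₂ : ℝ) (hε₁ : 0 < ε₁) (hε₂ : 0 < ε₂)
    (hd₁ : ball y₁ ε₁ ∩ f '' (sphere x₀ ε₀) = ∅)
    (hd₂ : ball y₂ ε₂ ∩ f '' (sphere x₀ ε₀) = ∅)
    (hdisj : closedBall y₁ ε₁ ∩ closedBall y₂ ε₂ = ∅) :
    ∃ c₁ c₂ : ℝ≥0∞, 0 < c₁ ∧ 0 < c₂ ∧
      ∃ α β : ℝ → EuclideanSpace ℝ (Fin n),
        ContinuousOn α {t : ℝ | 0 ≤ t ∧ ENNReal.ofReal t < c₁} ∧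
        ContinuousOn β {t : ℝ | 0 ≤ t ∧ ENNReal.ofReal t < c₂} ∧
        (∀ t : ℝ, 0 ≤ t → ENNReal.ofReal t < c₁ → α t ∈ ball x₀ ε₀ \ {x₀}) ∧
        (∀ t : ℝ, 0 ≤ t → ENNReal.ofReal t < c₂ → β t ∈ ball x₀ ε₀ \ {x₀}) ∧
        (∀ t : ℝ, 0 ≤ t → ENNReal.ofReal t < c₁ → f (α t) ∈ ball y₁ ε₁) ∧
        (∀ t : ℝ, 0 ≤ t → ENNReal.ofReal t < c₂ → f (β t) ∈ ball y₂ ε₂) ∧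
        Tendsto α (leftEndFilter c₁) (𝓝 x₀) ∧
        Tendsto β (leftEndFilter c₂) (𝓝 x₀) := by
  obtain ⟨α, ha1, ha2, ha3, ha4⟩ := one_side D x₀ f hf hD hopen hC y₁ hy₁ ε₀ hε₀ hball ε₁ hε₁ hd₁
  obtain ⟨β, hb1, hb2, hb3, hb4⟩ := one_side D x₀ f hf hD hopen hC y₂ hy₂ ε₀ hε₀ hball ε₂ hε₂ hd₂
  exact ⟨⊤, ⊤, by simp, by simp, α, β, ha1.mono fun t ht => ht.1, hb1.mono fun t ht => ht.1,
    fun t h _ => ha2 t h, fun t h _ => hb2 t h, fun t h _ => ha3 t h, fun t h _ => hb3 t h,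
    ha4.mono_left leftEndFilter_top_le, hb4.mono_left leftEndFilter_top_le⟩
end
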